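/- arXiv:1412.7526 — 2 statements merged into one kernel-verified Lean document; each statement's English description precedes it below -/
import Mathlib

section
/- The operator R : C(J,𝒮) → C(J,𝒮) defined by R(v)(t) = ∫₀^t f(s,v(s)) ds maps every bounded subset of C(J,𝒮) into a relatively compact subset of C(J,𝒮). -/
open Set MeasureTheory

noncomputable section

/-- Projection of `ℝ` onto the half line `J = [0, ∞)`. -/
def pj (s : ℝ) : Set.Ici (0:ℝ) := ⟨max 0 s, le_max_left 0 s⟩

/-- The seminorm `[x]ₙ = max_{1 ≤ i ≤ n} |xᵢ|` on `𝒮 = ℝ^ℕ` (components indexed from `0` to `n-1`). -/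
def semS (n : ℕ) (x : ℕ → ℝ) : ℝ := ⨆ i : Fin n, |x (i : ℕ)|

/-!
Let `M` be a bounded set of continuous maps on `[a, ∞)` with values in a space that has the
Heine-Borel property. On a compact interval `[a, T]` all `v ∈ M` take their values in one compact
set, hence the integrands `s ↦ f i s (v s)` are bounded there by a constant depending only on `i`
and `T`. Their primitives are therefore locally Lipschitz with a constant independent of `v`, so
each component of `R '' M` is equicontinuous and pointwise bounded. Since equicontinuity and
relative compactness in a product can be checked componentwise, the Arzelà-Ascoli theorem applies.
-/

open Bornology Topology

instance montelSpace_of_properSpace {𝕜 E : Type*} [NontriviallyNormedField 𝕜]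
    [SeminormedAddCommGroup E] [NormedSpace 𝕜 E] [ProperSpace E] : MontelSpace 𝕜 E where
  heine_borel _ hclosed hbdd :=
    Metric.isCompact_of_isClosed_isBounded hclosed ((NormedSpace.isVonNBounded_iff 𝕜).1 hbdd)

instance montelSpace_pi {𝕜 ι : Type*} {E : ι → Type*} [NormedField 𝕜]
    [∀ i, AddCommGroup (E i)] [∀ i, Module 𝕜 (E i)] [∀ i, TopologicalSpace (E i)]
    [∀ i, T1Space (E i)] [∀ i, RegularSpace (E i)] [∀ i, ContinuousConstSMul 𝕜 (E i)]
    [∀ i, MontelSpace 𝕜 (E i)] : MontelSpace 𝕜 (∀ i, E i) where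
  heine_borel s hclosed hbdd := by
    have hcompact (i : ι) : IsCompact (closure (Function.eval i '' s)) :=
      MontelSpace.isCompact_of_isClosed_of_isVonNBounded 𝕜 isClosed_closure
        (isVonNBounded_pi_iff.1 hbdd i).closure
    exact (isCompact_univ_pi hcompact).of_isClosed_subset hclosed
      fun x hx i _ => subset_closure (mem_image_of_mem _ hx)

section ContinuousMaps

variable {Y : Type*} [TopologicalSpace Y]

theorem isVonNBounded_image2_eval {𝕜 X : Type*} [SeminormedRing 𝕜] [AddCommGroup X] [Module 𝕜 X]
    [TopologicalSpace X] [IsTopologicalAddGroup X] [ContinuousConstSMul 𝕜 X] {M : Set C(Y, X)}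
    (hM : IsVonNBounded 𝕜 M) {K : Set Y} (hK : IsCompact K) :
    IsVonNBounded 𝕜 (image2 (fun v y => v y) M K) := by
  intro U hU
  have hmapsTo : {v : C(Y, X) | MapsTo v K (interior U)} ∈ 𝓝 0 :=
    ContinuousMap.eventually_mapsTo hK isOpen_interior fun _ _ => mem_interior_iff_mem_nhds.2 hU
  filter_upwards [hM hmapsTo] with c hc
  rw [image2_subset_iff]
  intro v hv y hy
  obtain ⟨w, hw, rfl⟩ := hc hv
  exact smul_mem_smul_set (interior_subset (hw hy))

theorem equicontinuous_pi_iff {ι κ : Type*} {α : ι → Type*} [∀ i, UniformSpace (α i)]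
    {F : κ → Y → ∀ i, α i} :
    Equicontinuous F ↔ ∀ i, Equicontinuous fun k y => F k y i := by
  rw [Pi.uniformSpace_eq, equicontinuous_iInf_rng]
  refine forall_congr' fun i => ?_
  let _ : UniformSpace (∀ i, α i) := .comap (Function.eval i) inferInstance
  exact IsUniformInducing.equicontinuous_iff (u := Function.eval i) ⟨rfl⟩

theorem isCompact_closure_range_of_equicontinuous [CompactlyCoherentSpace Y] {κ α : Type*}
    [UniformSpace α] [T2Space α] [CompleteSpace α] {F : κ → C(Y, α)}
    (hF : Equicontinuous fun k => ⇑(F k))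
    (hpointwise : ∀ y, ∃ Q, IsCompact Q ∧ ∀ k, F k y ∈ Q) :
    IsCompact (closure (range F)) := by
  have : T2Space (UniformOnFun Y α {K | IsCompact K}) :=
    UniformOnFun.t2Space_of_covering <| sUnion_eq_univ_iff.2 fun y =>
      ⟨{y}, isCompact_singleton, mem_singleton y⟩
  have hrange : Equicontinuous fun v : range F => ⇑(v : C(Y, α)) := fun y U hU => by
    simpa only [forall_subtype_range_iff] using hF y U hU
  exact ArzelaAscoli.isCompact_closure_of_isClosedEmbedding (fun _ hK => hK)
    ContinuousMap.isUniformEmbedding_toUniformOnFunIsCompact.isClosedEmbedding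
    (fun K _ => hrange.equicontinuousOn K)
    fun _ _ y _ => by simpa only [forall_mem_range] using hpointwise y

theorem isCompact_closure_range_of_equicontinuous_of_isBounded [CompactlyCoherentSpace Y]
    {ι κ : Type*} {E : ι → Type*} [∀ i, MetricSpace (E i)] [∀ i, ProperSpace (E i)]
    {F : κ → C(Y, ∀ i, E i)} (hF : ∀ i, Equicontinuous fun k y => F k y i)
    (hbdd : ∀ i y, IsBounded (range fun k => F k y i)) :
    IsCompact (closure (range F)) :=
  isCompact_closure_range_of_equicontinuous (equicontinuous_pi_iff.2 hF) fun y =>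
    ⟨univ.pi fun i => closure (range fun k => F k y i),
      isCompact_univ_pi fun i => (hbdd i y).isCompact_closure,
      fun k _ _ => subset_closure (mem_range_self k)⟩

end ContinuousMaps

section Primitives

variable {κ E : Type*} [NormedAddCommGroup E] [NormedSpace ℝ E] {a : ℝ} {g : κ → ℝ → E}

theorem dist_integral_le_of_norm_le {h : ℝ → E} {s t T C : ℝ} (hs : s ∈ Icc a T)
    (ht : t ∈ Icc a T) (hints : IntervalIntegrable h volume a s)
    (hintt : IntervalIntegrable h volume a t) (hC : ∀ r ∈ Icc a T, ‖h r‖ ≤ C) :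
    dist (∫ r in a..s, h r) (∫ r in a..t, h r) ≤ C * |t - s| := by
  rw [dist_comm, dist_eq_norm, intervalIntegral.integral_interval_sub_left hintt hints]
  exact intervalIntegral.norm_integral_le_of_norm_le_const fun r hr =>
    hC r (uIcc_subset_Icc hs ht (uIoc_subset_uIcc hr))

theorem equicontinuous_integral (hint : ∀ k, ∀ t ≥ a, IntervalIntegrable (g k) volume a t)
    (hbdd : ∀ T, ∃ C, ∀ k, ∀ s ∈ Icc a T, ‖g k s‖ ≤ C) :
    Equicontinuous fun k (t : Ici a) => ∫ s in a..t, g k s := by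
  intro t₀
  obtain ⟨C, hC⟩ := hbdd (t₀ + 1)
  have hmodulus : Filter.Tendsto (fun t : Ici a => C * |(t : ℝ) - t₀|) (𝓝 t₀) (𝓝 0) := by
    have hcont : Continuous fun t : Ici a => C * |(t : ℝ) - t₀| := by fun_prop
    simpa using hcont.tendsto t₀
  have hnear : ∀ᶠ t : Ici a in 𝓝 t₀, (t : ℝ) < t₀ + 1 :=
    continuous_subtype_val.continuousAt.eventually_lt_const (lt_add_one _)
  refine Metric.equicontinuousAt_of_continuity_modulus _ hmodulus _ ?_
  filter_upwards [hnear] with t ht k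
  exact dist_integral_le_of_norm_le ⟨t₀.2, (lt_add_one _).le⟩ ⟨t.2, ht.le⟩ (hint k t₀ t₀.2)
    (hint k t t.2) (hC k)

theorem isBounded_range_integral {t C : ℝ} (hat : a ≤ t)
    (hC : ∀ k, ∀ s ∈ Icc a t, ‖g k s‖ ≤ C) :
    IsBounded (range fun k => ∫ s in a..t, g k s) := by
  refine isBounded_iff_forall_norm_le.2 ⟨C * |t - a|, forall_mem_range.2 fun k => ?_⟩
  refine intervalIntegral.norm_integral_le_of_norm_le_const fun s hs => hC k s ?_
  exact uIcc_of_le hat ▸ uIoc_subset_uIcc hs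

end Primitives

theorem continuous_projIci {α : Type*} [LinearOrder α] [TopologicalSpace α]
    [OrderClosedTopology α] (a : α) : Continuous (projIci a) :=
  (continuous_const.max continuous_id).subtype_mk _

section Superposition

variable {X E : Type*} [TopologicalSpace X] {a : ℝ} {g : ℝ → X → E}

theorem continuousOn_superposition [TopologicalSpace E]
    (hg : ContinuousOn (fun q : ℝ × X => g q.1 q.2) (Ici a ×ˢ univ)) (v : C(Ici a, X)) :
    ContinuousOn (fun s => g s (v (projIci a s))) (Ici a) := by
  have hgraph : Continuous fun s => (s, v (projIci a s)) :=
    continuous_id.prodMk (v.continuous.comp (continuous_projIci a))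
  exact hg.comp hgraph.continuousOn fun s hs => ⟨hs, mem_univ _⟩

theorem intervalIntegrable_superposition [NormedAddCommGroup E]
    (hg : ContinuousOn (fun q : ℝ × X => g q.1 q.2) (Ici a ×ˢ univ)) (v : C(Ici a, X))
    {t : ℝ} (hat : a ≤ t) :
    IntervalIntegrable (fun s => g s (v (projIci a s))) volume a t :=
  ((continuousOn_superposition hg v).mono
    ((uIcc_of_le hat).trans_subset Icc_subset_Ici_self)).intervalIntegrable

theorem exists_norm_superposition_le [SeminormedAddCommGroup E] [AddCommGroup X] [Module ℝ X]
    [IsTopologicalAddGroup X] [ContinuousConstSMul ℝ X] [T1Space X] [MontelSpace ℝ X]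
    (hg : ContinuousOn (fun q : ℝ × X => g q.1 q.2) (Ici a ×ˢ univ)) {M : Set C(Ici a, X)}
    (hM : IsVonNBounded ℝ M) (T : ℝ) :
    ∃ C, ∀ v ∈ M, ∀ s ∈ Icc a T, ‖g s (v (projIci a s))‖ ≤ C := by
  have hK : IsCompact (projIci a '' Icc a T) :=
    isCompact_Icc.image (continuous_projIci a)
  have hQ : IsCompact (closure (image2 (fun v s => v s) M (projIci a '' Icc a T))) :=
    MontelSpace.isCompact_of_isClosed_of_isVonNBounded ℝ isClosed_closure
      (isVonNBounded_image2_eval hM hK).closure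
  obtain ⟨C, hC⟩ := (isCompact_Icc.prod hQ).exists_bound_of_continuousOn
    (hg.mono (prod_mono Icc_subset_Ici_self (subset_univ _)))
  exact ⟨C, fun v hv s hs =>
    hC (s, _) ⟨hs, subset_closure (mem_image2_of_mem hv (mem_image_of_mem _ hs))⟩⟩

end Superposition

theorem statement_6_general {X ι : Type*} {E : ι → Type*} [AddCommGroup X] [Module ℝ X]
    [TopologicalSpace X] [IsTopologicalAddGroup X] [ContinuousConstSMul ℝ X] [T1Space X]
    [MontelSpace ℝ X] [∀ i, NormedAddCommGroup (E i)] [∀ i, NormedSpace ℝ (E i)]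
    [∀ i, ProperSpace (E i)] {a : ℝ} {f : ∀ i, ℝ → X → E i}
    (hf : ∀ i, ContinuousOn (fun q : ℝ × X => f i q.1 q.2) (Ici a ×ˢ univ))
    (R : C(Ici a, X) → C(Ici a, ∀ i, E i))
    (hR : ∀ v t i, R v t i = ∫ s in a..(t : ℝ), f i s (v (projIci a s)))
    {M : Set C(Ici a, X)} (hM : IsVonNBounded ℝ M) :
    IsCompact (closure (R '' M)) := by
  let g (i : ι) (v : M) (s : ℝ) : E i := f i s (v.1 (projIci a s))
  have hbdd (i : ι) (T : ℝ) : ∃ C, ∀ v : M, ∀ s ∈ Icc a T, ‖g i v s‖ ≤ C := by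
    simpa only [Subtype.forall] using exists_norm_superposition_le (hf i) hM T
  rw [image_eq_range]
  refine isCompact_closure_range_of_equicontinuous_of_isBounded (fun i => ?_) fun i t => ?_
  · simp only [hR]
    exact equicontinuous_integral (fun v _ => intervalIntegrable_superposition (hf i) v.1) (hbdd i)
  · obtain ⟨C, hC⟩ := hbdd i t
    simpa only [hR] using isBounded_range_integral t.2 hC

/-- The operator `R : C(J,𝒮) → C(J,𝒮)`, `R(v)(t) = ∫₀^t f(s,v(s)) ds` (componentwise),
maps every (von Neumann) bounded subset of `C(J,𝒮)` into a relatively compact subset. -/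
theorem statement_6
    (f : ℕ → ℝ → (ℕ → ℝ) → ℝ)
    (hf : ∀ n, ContinuousOn (fun q : ℝ × (ℕ → ℝ) => f n q.1 q.2)
      (Set.Ici (0:ℝ) ×ˢ (Set.univ : Set (ℕ → ℝ))))
    (R : C(Set.Ici (0:ℝ), ℕ → ℝ) → C(Set.Ici (0:ℝ), ℕ → ℝ))
    (hR : ∀ (v : C(Set.Ici (0:ℝ), ℕ → ℝ)) (t : Set.Ici (0:ℝ)) (n : ℕ),
      R v t n = ∫ s in (0:ℝ)..(t : ℝ), f n s (v (pj s))) :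
    ∀ M : Set C(Set.Ici (0:ℝ), ℕ → ℝ),
      Bornology.IsVonNBounded ℝ M → IsCompact (closure (R '' M)) :=
  fun _ hM => statement_6_general hf R hR hM
end
end

section
/- Fix p ∈ ℕ, t_p > t₀ and θ_p > 0, and suppose that [f(t,x)]_{n_p} ≤ A_p(t)[x]_{n_p} + B_p for all t ∈ [0,t₀] and x ∈ 𝒮, and [f(t,x)]_{n_p} ≤ C_p([x]_{n_p} + 1) for all t ∈ [t₀,t_p] and x ∈ 𝒮, where A_p ∈ L¹(0,t₀) is nonnegative and B_p, C_p ≥ 0. Let M_p = G_p‖A_p‖_{L¹} + C_p/θ_p, K_p = G_p t₀ B_p + C_p(t_p − t₀), and suppose M_p < 1. Then for every ρ_p ≥ (1 − M_p)^{-1}K_p, the set Ω_p = {x ∈ C(J,𝒮) : ℛ_p(x) ≤ ρ_p} satisfies T(Ω_p) ⊆ Ω_p, where ℛ_p(x) = max{𝒫_p(x), 𝒬_p(x)}, 𝒫_p(x) = max_{0≤t≤t₀} [x(t)]_{n_p}, 𝒬_p(x) = max_{t₀≤t≤t_p} e^{−θ_p(t−t₀)}[x(t)]_{n_p}, and G_p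 = [(𝕀 − ⟨α,𝕀⟩)^{-1}]_{n_p}·[‖α‖_*]_{n_p} + 1. -/
open Set MeasureTheory

noncomputable section

/-- Restriction of the `n`-th component of `x ∈ C(J, 𝒮)` to `[0, t₀]`, as an element of `C([0,t₀], ℝ)`. -/
def restr (t₀ : ℝ) (x : C(Set.Ici (0:ℝ), ℕ → ℝ)) (n : ℕ) : C(Set.Icc (0:ℝ) t₀, ℝ) :=
  ⟨fun s => x ⟨s.1, s.2.1⟩ n,
    ((continuous_apply n).comp x.continuous).comp
      (continuous_inclusion Set.Icc_subset_Ici_self)⟩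

/-- `IsT t₀ f α T` says that `T` is the operator
`T(v)(t) = (𝕀 − ⟨α,𝕀⟩)⁻¹ · ⟨α, (∫₀^· f(s,v(s)) ds)|_{[0,t₀]}⟩ + ∫₀^t f(s,v(s)) ds`,
written componentwise; `P` is the restriction of the primitive `∫₀^· f_n(s,v(s)) ds` to `[0,t₀]`. -/
def IsT (t₀ : ℝ) (f : ℕ → ℝ → (ℕ → ℝ) → ℝ)
    (α : ℕ → C(Set.Icc (0:ℝ) t₀, ℝ) →L[ℝ] ℝ)
    (T : C(Set.Ici (0:ℝ), ℕ → ℝ) → C(Set.Ici (0:ℝ), ℕ → ℝ)) : Prop :=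
  ∀ v : C(Set.Ici (0:ℝ), ℕ → ℝ), ∀ n : ℕ,
    ∃ P : C(Set.Icc (0:ℝ) t₀, ℝ),
      (∀ s : Set.Icc (0:ℝ) t₀, P s = ∫ u in (0:ℝ)..(s : ℝ), f n u (v (pj u))) ∧
      ∀ t : Set.Ici (0:ℝ),
        T v t n = (1 - α n 1)⁻¹ * α n P + ∫ s in (0:ℝ)..(t : ℝ), f n s (v (pj s))

/-- `𝒫ₙ(x) = max_{0 ≤ t ≤ t₀} [x(t)]ₙ`. -/
def Psem (t₀ : ℝ) (n : ℕ) (x : C(Set.Ici (0:ℝ), ℕ → ℝ)) : ℝ :=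
  ⨆ t : Set.Icc (0:ℝ) t₀, semS n (x ⟨t.1, t.2.1⟩)

/-- `𝒬ₙ(x) = max_{t₀ ≤ t ≤ t_p} e^{-θ(t-t₀)} [x(t)]ₙ`. -/
def Qsem (t₀ tp θ : ℝ) (ht₀ : 0 ≤ t₀) (n : ℕ) (x : C(Set.Ici (0:ℝ), ℕ → ℝ)) : ℝ :=
  ⨆ t : Set.Icc t₀ tp, Real.exp (-θ * (t.1 - t₀)) * semS n (x ⟨t.1, le_trans ht₀ t.2.1⟩)

/-- `Gₙ = [(𝕀 − ⟨α,𝕀⟩)⁻¹]ₙ · [‖α‖_*]ₙ + 1`. -/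
def Gconst (t₀ : ℝ) (α : ℕ → C(Set.Icc (0:ℝ) t₀, ℝ) →L[ℝ] ℝ) (n : ℕ) : ℝ :=
  semS n (fun i => (1 - α i 1)⁻¹) * semS n (fun i => ‖α i‖) + 1

/-!
For `v ∈ Ω_p` the growth condition on `[0, t₀]` bounds every primitive `∫₀^t f_i(s, v(s)) ds` there
by `D = ‖A_p‖ ρ_p + t₀ B_p`, hence the nonlocal term by `(G_p - 1) D`, and so `𝒫_p(T v) ≤ G_p D`.
For `t ≥ t₀` there is the extra term `∫_{t₀}^t C_p (e^{θ_p (s - t₀)} ρ_p + 1) ds`, and since the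
weight `e^{-θ_p (t - t₀)}` is at most `1` the factor `1 / θ_p` is all that survives of the
exponential: `𝒬_p(T v) ≤ G_p D + (C_p / θ_p) ρ_p + C_p (t_p - t₀) = M_p ρ_p + K_p ≤ ρ_p`.
-/

lemma semS_eq_norm (n : ℕ) (x : ℕ → ℝ) : semS n x = ‖fun i : Fin n => x i‖ := by
  refine le_antisymm (Real.iSup_le (norm_le_pi_norm fun i : Fin n => x i) (norm_nonneg _)) ?_
  exact (pi_norm_le_iff_of_nonneg (Real.iSup_nonneg fun _ => abs_nonneg _)).2
    (le_ciSup (f := fun i : Fin n => |x i|) (Set.finite_range _).bddAbove)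

lemma semS_nonneg (n : ℕ) (x : ℕ → ℝ) : 0 ≤ semS n x :=
  semS_eq_norm n x ▸ norm_nonneg _

lemma semS_le_iff {n : ℕ} {x : ℕ → ℝ} {c : ℝ} (hc : 0 ≤ c) :
    semS n x ≤ c ↔ ∀ i < n, |x i| ≤ c := by
  rw [semS_eq_norm, pi_norm_le_iff_of_nonneg hc, Fin.forall_iff]
  rfl

lemma abs_le_semS {n i : ℕ} (x : ℕ → ℝ) (hi : i < n) : |x i| ≤ semS n x :=
  (semS_le_iff (semS_nonneg n x)).1 le_rfl i hi

lemma continuous_semS (n : ℕ) : Continuous (semS n) := by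
  simp only [funext (semS_eq_norm n)]
  fun_prop

lemma continuous_pj : Continuous pj := by
  unfold pj
  fun_prop

lemma pj_of_nonneg {s : ℝ} (hs : 0 ≤ s) : pj s = ⟨s, hs⟩ :=
  Subtype.ext (max_eq_right hs)

lemma Psem_nonneg (t₀ : ℝ) (n : ℕ) (x : C(Set.Ici (0 : ℝ), ℕ → ℝ)) : 0 ≤ Psem t₀ n x :=
  Real.iSup_nonneg fun _ => semS_nonneg _ _

lemma Psem_le_iff {t₀ c : ℝ} {n : ℕ} {x : C(Set.Ici (0 : ℝ), ℕ → ℝ)} (hc : 0 ≤ c) :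
    Psem t₀ n x ≤ c ↔ ∀ t ∈ Set.Icc 0 t₀, semS n (x (pj t)) ≤ c := by
  have hcont : Continuous fun t : Set.Icc (0 : ℝ) t₀ => semS n (x ⟨t.1, t.2.1⟩) :=
    (continuous_semS n).comp (by fun_prop)
  constructor
  · intro h t ht
    rw [pj_of_nonneg ht.1]
    exact (le_ciSup (isCompact_range hcont).bddAbove ⟨t, ht⟩).trans h
  · intro h
    refine Real.iSup_le (fun t => ?_) hc
    simpa only [pj_of_nonneg t.2.1] using h t t.2

lemma Qsem_le_iff {t₀ tp θ c : ℝ} (ht₀ : 0 ≤ t₀) {n : ℕ} {x : C(Set.Ici (0 : ℝ), ℕ → ℝ)}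
    (hc : 0 ≤ c) :
    Qsem t₀ tp θ ht₀ n x ≤ c ↔
      ∀ t ∈ Set.Icc t₀ tp, semS n (x (pj t)) ≤ Real.exp (θ * (t - t₀)) * c := by
  have hcont : Continuous fun t : Set.Icc t₀ tp =>
      Real.exp (-θ * (t.1 - t₀)) * semS n (x ⟨t.1, ht₀.trans t.2.1⟩) :=
    Continuous.mul (by fun_prop) ((continuous_semS n).comp (by fun_prop))
  have hweight (t y : ℝ) : Real.exp (-θ * (t - t₀)) * y ≤ c ↔ y ≤ Real.exp (θ * (t - t₀)) * c := by
    rw [neg_mul, Real.exp_neg, inv_mul_le_iff₀ (Real.exp_pos _)]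
  constructor
  · intro h t ht
    rw [pj_of_nonneg (ht₀.trans ht.1), ← hweight]
    exact (le_ciSup (isCompact_range hcont).bddAbove ⟨t, ht⟩).trans h
  · intro h
    refine Real.iSup_le (fun t => ?_) hc
    simpa only [hweight, pj_of_nonneg (ht₀.trans t.2.1)] using h t t.2

lemma one_le_Gconst (t₀ : ℝ) (α : ℕ → C(Set.Icc (0 : ℝ) t₀, ℝ) →L[ℝ] ℝ) (n : ℕ) :
    1 ≤ Gconst t₀ α n :=
  le_add_of_nonneg_left (mul_nonneg (semS_nonneg _ _) (semS_nonneg _ _))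

lemma abs_inv_mul_apply_le {t₀ D : ℝ} {n i : ℕ} (α : ℕ → C(Set.Icc (0 : ℝ) t₀, ℝ) →L[ℝ] ℝ)
    (hi : i < n) {P : C(Set.Icc (0 : ℝ) t₀, ℝ)} (hP : ‖P‖ ≤ D) :
    |(1 - α i 1)⁻¹ * α i P| ≤ (Gconst t₀ α n - 1) * D := by
  have hinv : |(1 - α i 1)⁻¹| ≤ semS n fun i => (1 - α i 1)⁻¹ :=
    abs_le_semS (fun i => (1 - α i 1)⁻¹) hi
  have hnorm : ‖α i‖ ≤ semS n fun i => ‖α i‖ :=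
    (le_abs_self _).trans (abs_le_semS (fun i => ‖α i‖) hi)
  have happly : |α i P| ≤ semS n (fun i => ‖α i‖) * D :=
    ((α i).le_opNorm P).trans (mul_le_mul hnorm hP (norm_nonneg _) (semS_nonneg _ _))
  rw [abs_mul, Gconst, add_sub_cancel_right, mul_assoc]
  exact mul_le_mul hinv happly (abs_nonneg _) (semS_nonneg _ _)

section IntervalIntegral

variable {E : Type*} [NormedAddCommGroup E] {u : ℝ → E} {a b t : ℝ}

lemma intervalIntegrable_of_norm_le {g : ℝ → ℝ} (hab : a ≤ b)
    (hg : IntervalIntegrable g volume a b)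
    (hu_meas : AEStronglyMeasurable u (volume.restrict (Set.Icc a b)))
    (hu : ∀ s ∈ Set.Icc a b, ‖u s‖ ≤ g s) : IntervalIntegrable u volume a b := by
  rw [intervalIntegrable_iff_integrableOn_Icc_of_le hab] at hg ⊢
  exact hg.mono' hu_meas ((ae_restrict_iff' measurableSet_Icc).2 (.of_forall hu))

variable [NormedSpace ℝ E]

lemma norm_integral_le_of_norm_le_mul_add {ρ B : ℝ} {A : ℝ → ℝ} (ht : t ∈ Set.Icc a b)
    (hA : ∀ s ∈ Set.Icc a b, 0 ≤ A s) (hA_int : IntervalIntegrable A volume a b)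
    (hρ : 0 ≤ ρ) (hB : 0 ≤ B) (hu : ∀ s ∈ Set.Icc a b, ‖u s‖ ≤ A s * ρ + B) :
    ‖∫ s in a..t, u s‖ ≤ (∫ s in a..b, A s) * ρ + (b - a) * B := by
  have hint : IntervalIntegrable (fun s => A s * ρ + B) volume a b :=
    (hA_int.mul_const ρ).add intervalIntegrable_const
  have hnonneg : 0 ≤ᵐ[volume.restrict (Set.Ioc a b)] fun s => A s * ρ + B :=
    (ae_restrict_iff' measurableSet_Ioc).2 <| .of_forall fun s hs =>
      add_nonneg (mul_nonneg (hA s (Set.Ioc_subset_Icc_self hs)) hρ) hB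
  calc ‖∫ s in a..t, u s‖
      ≤ ∫ s in a..t, (A s * ρ + B) :=
        intervalIntegral.norm_integral_le_of_norm_le ht.1
          (.of_forall fun s hs => hu s ⟨hs.1.le, hs.2.trans ht.2⟩)
          (hint.mono_set (Set.uIcc_subset_uIcc_left (Set.Icc_subset_uIcc ht)))
    _ ≤ ∫ s in a..b, (A s * ρ + B) :=
        intervalIntegral.integral_mono_interval le_rfl ht.1 ht.2 hnonneg hint
    _ = (∫ s in a..b, A s) * ρ + (b - a) * B := by
        rw [intervalIntegral.integral_add (hA_int.mul_const ρ) intervalIntegrable_const,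
          intervalIntegral.integral_mul_const, intervalIntegral.integral_const, smul_eq_mul]

lemma integral_exp_mul_sub {θ : ℝ} (hθ : θ ≠ 0) (a t : ℝ) :
    ∫ s in a..t, Real.exp (θ * (s - a)) = (Real.exp (θ * (t - a)) - 1) / θ := by
  rw [intervalIntegral.integral_comp_sub_right (fun s => Real.exp (θ * s)),
    intervalIntegral.integral_comp_mul_left Real.exp hθ, integral_exp, sub_self, mul_zero,
    Real.exp_zero, smul_eq_mul, inv_mul_eq_div]

lemma norm_integral_le_of_norm_le_exp {θ ρ C : ℝ} (hat : a ≤ t) (hθ : θ ≠ 0)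
    (hu : ∀ s ∈ Set.Icc a t, ‖u s‖ ≤ C * (Real.exp (θ * (s - a)) * ρ + 1)) :
    ‖∫ s in a..t, u s‖ ≤ C / θ * ρ * (Real.exp (θ * (t - a)) - 1) + C * (t - a) := by
  have hexp : Continuous fun s => Real.exp (θ * (s - a)) * ρ := by fun_prop
  have hbound : Continuous fun s => C * (Real.exp (θ * (s - a)) * ρ + 1) := by fun_prop
  calc ‖∫ s in a..t, u s‖
      ≤ ∫ s in a..t, C * (Real.exp (θ * (s - a)) * ρ + 1) :=
        intervalIntegral.norm_integral_le_of_norm_le hat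
          (.of_forall fun s hs => hu s (Set.Ioc_subset_Icc_self hs))
          (hbound.intervalIntegrable _ _)
    _ = C * ((Real.exp (θ * (t - a)) - 1) / θ * ρ + (t - a)) := by
        rw [intervalIntegral.integral_const_mul,
          intervalIntegral.integral_add (hexp.intervalIntegrable _ _) intervalIntegrable_const,
          intervalIntegral.integral_mul_const, integral_exp_mul_sub hθ, integral_one]
    _ = C / θ * ρ * (Real.exp (θ * (t - a)) - 1) + C * (t - a) := by ring

end IntervalIntegral

lemma mul_add_le_of_inv_one_sub_mul_le {M K ρ : ℝ} (hM : M < 1) (h : (1 - M)⁻¹ * K ≤ ρ) :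
    M * ρ + K ≤ ρ := by
  rw [inv_mul_le_iff₀ (sub_pos.2 hM)] at h
  linarith

lemma add_mul_sub_one_le_mul {x y c ρ : ℝ} (hx : 0 ≤ x) (hy : 0 ≤ y) (hc : 1 ≤ c)
    (h : x + y ≤ ρ) : x + y * (c - 1) ≤ c * ρ := by
  calc x + y * (c - 1) ≤ c * x + c * y := by linarith [le_mul_of_one_le_left hx hc]
    _ = c * (x + y) := (mul_add c x y).symm
    _ ≤ c * ρ := by gcongr

/-- The superposition (Nemytskii) operator `v ↦ f(·, v(·))` of `f`, evaluated at `v ∈ C(J, 𝒮)`.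
As in `IsT`, it is a function on all of `ℝ`, with `v` extended by `v(0)` to negative times. -/
def nemytskii (f : ℕ → ℝ → (ℕ → ℝ) → ℝ) (v : C(Set.Ici (0 : ℝ), ℕ → ℝ)) (s : ℝ) : ℕ → ℝ :=
  fun i => f i s (v (pj s))

lemma continuousOn_nemytskii {f : ℕ → ℝ → (ℕ → ℝ) → ℝ} {i : ℕ}
    (hf : ContinuousOn (fun q : ℝ × (ℕ → ℝ) => f i q.1 q.2)
      (Set.Ici (0 : ℝ) ×ˢ (Set.univ : Set (ℕ → ℝ))))
    (v : C(Set.Ici (0 : ℝ), ℕ → ℝ)) :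
    ContinuousOn (fun s => nemytskii f v s i) (Set.Ici 0) := by
  have hgraph : Continuous fun s => (s, v (pj s)) :=
    continuous_id.prodMk (v.continuous.comp continuous_pj)
  exact hf.comp hgraph.continuousOn fun s hs => ⟨hs, Set.mem_univ _⟩

lemma abs_nemytskii_le {f : ℕ → ℝ → (ℕ → ℝ) → ℝ} {v : C(Set.Ici (0 : ℝ), ℕ → ℝ)}
    {n i : ℕ} {s a b r : ℝ} (hi : i < n) (ha : 0 ≤ a)
    (hf : ∀ x : ℕ → ℝ, semS n (fun i => f i s x) ≤ a * semS n x + b)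
    (hv : semS n (v (pj s)) ≤ r) : |nemytskii f v s i| ≤ a * r + b :=
  calc |nemytskii f v s i| ≤ semS n (nemytskii f v s) := abs_le_semS _ hi
    _ ≤ a * semS n (v (pj s)) + b := hf _
    _ ≤ a * r + b := by gcongr

lemma abs_integral_nemytskii_le {f : ℕ → ℝ → (ℕ → ℝ) → ℝ} {v : C(Set.Ici (0 : ℝ), ℕ → ℝ)}
    {i : ℕ} {t₀ t ρ B : ℝ} {A : ℝ → ℝ} (ht : t ∈ Set.Icc 0 t₀)
    (hA : ∀ s ∈ Set.Icc 0 t₀, 0 ≤ A s) (hA_int : IntervalIntegrable A volume 0 t₀)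
    (hρ : 0 ≤ ρ) (hB : 0 ≤ B)
    (hv : ∀ s ∈ Set.Icc 0 t₀, |nemytskii f v s i| ≤ A s * ρ + B) :
    |∫ s in (0 : ℝ)..t, nemytskii f v s i| ≤ (∫ s in (0 : ℝ)..t₀, A s) * ρ + t₀ * B := by
  simpa only [sub_zero, Real.norm_eq_abs] using
    norm_integral_le_of_norm_le_mul_add (u := fun s => nemytskii f v s i) ht hA hA_int hρ hB hv

namespace IsT

variable {t₀ t θ ρ B C : ℝ} {n i : ℕ} {A : ℝ → ℝ} {f : ℕ → ℝ → (ℕ → ℝ) → ℝ}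
  {α : ℕ → C(Set.Icc (0 : ℝ) t₀, ℝ) →L[ℝ] ℝ}
  {T : C(Set.Ici (0 : ℝ), ℕ → ℝ) → C(Set.Ici (0 : ℝ), ℕ → ℝ)} {v : C(Set.Ici (0 : ℝ), ℕ → ℝ)}

lemma abs_apply_le {D : ℝ} (hT : IsT t₀ f α T) (hi : i < n) (ht : 0 ≤ t) (hD : 0 ≤ D)
    (hv : ∀ s ∈ Set.Icc 0 t₀, |∫ r in (0 : ℝ)..s, nemytskii f v r i| ≤ D) :
    |T v (pj t) i| ≤ (Gconst t₀ α n - 1) * D + |∫ s in (0 : ℝ)..t, nemytskii f v s i| := by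
  obtain ⟨P, hP, hTv⟩ := hT v i
  have hP_norm : ‖P‖ ≤ D :=
    (ContinuousMap.norm_le P hD).2 fun s => (congrArg norm (hP s)).trans_le (hv s s.2)
  rw [pj_of_nonneg ht, hTv]
  exact (abs_add_le _ _).trans (add_le_add_left (abs_inv_mul_apply_le α hi hP_norm) _)

lemma abs_apply_le_of_le (hT : IsT t₀ f α T) (hi : i < n) (ht : t ∈ Set.Icc 0 t₀)
    (hA : ∀ s ∈ Set.Icc 0 t₀, 0 ≤ A s) (hA_int : IntervalIntegrable A volume 0 t₀)
    (hρ : 0 ≤ ρ) (hB : 0 ≤ B)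
    (hv : ∀ s ∈ Set.Icc 0 t₀, |nemytskii f v s i| ≤ A s * ρ + B) :
    |T v (pj t) i| ≤ Gconst t₀ α n * ((∫ s in (0 : ℝ)..t₀, A s) * ρ + t₀ * B) := by
  have hprim (s : ℝ) (hs : s ∈ Set.Icc 0 t₀) :=
    abs_integral_nemytskii_le hs hA hA_int hρ hB hv
  have hT_le := hT.abs_apply_le hi ht.1 ((abs_nonneg _).trans (hprim t ht)) hprim
  rw [sub_one_mul] at hT_le
  linarith [hprim t ht]

lemma abs_apply_le_of_ge (hT : IsT t₀ f α T) (hi : i < n) (ht₀ : 0 ≤ t₀) (ht : t₀ ≤ t)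
    (hmeas : AEStronglyMeasurable (fun s => nemytskii f v s i) (volume.restrict (Set.Icc 0 t)))
    (hA : ∀ s ∈ Set.Icc 0 t₀, 0 ≤ A s) (hA_int : IntervalIntegrable A volume 0 t₀)
    (hρ : 0 ≤ ρ) (hB : 0 ≤ B) (hθ : θ ≠ 0)
    (hv_left : ∀ s ∈ Set.Icc 0 t₀, |nemytskii f v s i| ≤ A s * ρ + B)
    (hv_right : ∀ s ∈ Set.Icc t₀ t,
      |nemytskii f v s i| ≤ C * (Real.exp (θ * (s - t₀)) * ρ + 1)) :
    |T v (pj t) i| ≤ Gconst t₀ α n * ((∫ s in (0 : ℝ)..t₀, A s) * ρ + t₀ * B) +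
      (C / θ * ρ * (Real.exp (θ * (t - t₀)) - 1) + C * (t - t₀)) := by
  have hprim (s : ℝ) (hs : s ∈ Set.Icc 0 t₀) :=
    abs_integral_nemytskii_le hs hA hA_int hρ hB hv_left
  have hhead := hprim t₀ ⟨ht₀, le_rfl⟩
  have htail := norm_integral_le_of_norm_le_exp (u := fun s => nemytskii f v s i) ht hθ hv_right
  have hint_left : IntervalIntegrable (fun s => nemytskii f v s i) volume 0 t₀ :=
    intervalIntegrable_of_norm_le ht₀ ((hA_int.mul_const ρ).add intervalIntegrable_const)
      (hmeas.mono_set (Set.Icc_subset_Icc_right ht)) hv_left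
  have hint_right : IntervalIntegrable (fun s => nemytskii f v s i) volume t₀ t :=
    intervalIntegrable_of_norm_le ht (Continuous.intervalIntegrable (by fun_prop) _ _)
      (hmeas.mono_set (Set.Icc_subset_Icc_left ht₀)) hv_right
  have hT_le := hT.abs_apply_le hi (ht₀.trans ht) ((abs_nonneg _).trans hhead) hprim
  rw [← intervalIntegral.integral_add_adjacent_intervals hint_left hint_right, sub_one_mul]
    at hT_le
  rw [Real.norm_eq_abs] at htail
  linarith [abs_add_le (∫ s in (0 : ℝ)..t₀, nemytskii f v s i) (∫ s in t₀..t, nemytskii f v s i)]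

end IsT

theorem statement_10_general {t₀ tp θ ρ B C : ℝ} {n : ℕ} {A : ℝ → ℝ}
    {f : ℕ → ℝ → (ℕ → ℝ) → ℝ} {α : ℕ → C(Set.Icc (0 : ℝ) t₀, ℝ) →L[ℝ] ℝ}
    {T : C(Set.Ici (0 : ℝ), ℕ → ℝ) → C(Set.Ici (0 : ℝ), ℕ → ℝ)}
    (ht₀ : 0 ≤ t₀) (htp : t₀ ≤ tp) (hθ : 0 < θ)
    (hf : ∀ v, ∀ i < n,
      AEStronglyMeasurable (fun s => nemytskii f v s i) (volume.restrict (Set.Icc 0 tp)))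
    (hT : IsT t₀ f α T)
    (hA : ∀ t ∈ Set.Icc 0 t₀, 0 ≤ A t) (hA_int : IntervalIntegrable A volume 0 t₀)
    (hB : 0 ≤ B) (hC : 0 ≤ C)
    (hgrowth_left : ∀ t ∈ Set.Icc 0 t₀, ∀ x : ℕ → ℝ,
      semS n (fun i => f i t x) ≤ A t * semS n x + B)
    (hgrowth_right : ∀ t ∈ Set.Icc t₀ tp, ∀ x : ℕ → ℝ,
      semS n (fun i => f i t x) ≤ C * (semS n x + 1))
    (hM : Gconst t₀ α n * (∫ t in (0 : ℝ)..t₀, A t) + C / θ < 1)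
    (hρ : (1 - (Gconst t₀ α n * (∫ t in (0 : ℝ)..t₀, A t) + C / θ))⁻¹ *
      (Gconst t₀ α n * t₀ * B + C * (tp - t₀)) ≤ ρ) :
    Set.MapsTo T {x | max (Psem t₀ n x) (Qsem t₀ tp θ ht₀ n x) ≤ ρ}
      {x | max (Psem t₀ n x) (Qsem t₀ tp θ ht₀ n x) ≤ ρ} := by
  intro v hv
  have hρ₀ : 0 ≤ ρ := (Psem_nonneg t₀ n v).trans ((le_max_left _ _).trans hv)
  simp only [Set.mem_ofPred_eq, max_le_iff, Psem_le_iff hρ₀, Qsem_le_iff ht₀ hρ₀] at hv ⊢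
  set D := (∫ t in (0 : ℝ)..t₀, A t) * ρ + t₀ * B
  have hleft : ∀ i < n, ∀ s ∈ Set.Icc 0 t₀, |nemytskii f v s i| ≤ A s * ρ + B :=
    fun i hi s hs => abs_nemytskii_le hi (hA s hs) (hgrowth_left s hs) (hv.1 s hs)
  have hright : ∀ i < n, ∀ s ∈ Set.Icc t₀ tp,
      |nemytskii f v s i| ≤ C * (Real.exp (θ * (s - t₀)) * ρ + 1) := fun i hi s hs => by
    simpa only [mul_add, mul_one] using
      abs_nemytskii_le hi hC (by simpa only [mul_add, mul_one] using hgrowth_right s hs)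
        (hv.2 s hs)
  have hself : Gconst t₀ α n * D + C * (tp - t₀) + C / θ * ρ ≤ ρ := by
    linarith [mul_add_le_of_inv_one_sub_mul_le hM hρ]
  have hGD : 0 ≤ Gconst t₀ α n * D :=
    mul_nonneg (zero_le_one.trans (one_le_Gconst t₀ α n)) <|
      add_nonneg (mul_nonneg (intervalIntegral.integral_nonneg ht₀ hA) hρ₀)
        (mul_nonneg ht₀ hB)
  have hCt : 0 ≤ C * (tp - t₀) := mul_nonneg hC (sub_nonneg.2 htp)
  have hCθ : 0 ≤ C / θ * ρ := by positivity
  refine ⟨fun t ht => (semS_le_iff hρ₀).2 fun i hi => ?_,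
    fun t ht => (semS_le_iff (by positivity)).2 fun i hi => ?_⟩
  · linarith [hT.abs_apply_le_of_le hi ht hA hA_int hρ₀ hB (hleft i hi)]
  · calc |T v (pj t) i|
        ≤ Gconst t₀ α n * D + (C / θ * ρ * (Real.exp (θ * (t - t₀)) - 1) + C * (t - t₀)) :=
          hT.abs_apply_le_of_ge hi ht₀ ht.1
            ((hf v i hi).mono_set (Set.Icc_subset_Icc_right ht.2)) hA hA_int hρ₀ hB hθ.ne'
            (hleft i hi) fun s hs => hright i hi s ⟨hs.1, hs.2.trans ht.2⟩
      _ ≤ Gconst t₀ α n * D + C * (tp - t₀) + C / θ * ρ * (Real.exp (θ * (t - t₀)) - 1) := by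
          linarith [mul_le_mul_of_nonneg_left (sub_le_sub_right ht.2 t₀) hC]
      _ ≤ Real.exp (θ * (t - t₀)) * ρ :=
          add_mul_sub_one_le_mul (add_nonneg hGD hCt) hCθ
            (Real.one_le_exp (mul_nonneg hθ.le (sub_nonneg.2 ht.1))) hself

/-- Invariance of the set `Ω_p = {x : ℛ_p(x) ≤ ρ_p}` under `T`, where
`ℛ_p = max(𝒫_p, 𝒬_p)`, provided `M_p = G_p‖A_p‖_{L¹} + C_p/θ_p < 1` and
`ρ_p ≥ (1 − M_p)⁻¹ K_p` with `K_p = G_p t₀ B_p + C_p(t_p − t₀)`. -/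
theorem statement_10
    (t₀ : ℝ) (ht₀ : 0 < t₀)
    (f : ℕ → ℝ → (ℕ → ℝ) → ℝ)
    (hf : ∀ n, ContinuousOn (fun q : ℝ × (ℕ → ℝ) => f n q.1 q.2)
      (Set.Ici (0:ℝ) ×ˢ (Set.univ : Set (ℕ → ℝ))))
    (α : ℕ → C(Set.Icc (0:ℝ) t₀, ℝ) →L[ℝ] ℝ)
    (hα : ∀ n, α n 1 ≠ 1)
    (T : C(Set.Ici (0:ℝ), ℕ → ℝ) → C(Set.Ici (0:ℝ), ℕ → ℝ))
    (hT : IsT t₀ f α T)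
    (np : ℕ → ℕ) (hnp : StrictMono np) (hnp0 : ∀ q, 0 < np q)
    (p : ℕ)
    (tp : ℝ) (htp : t₀ < tp) (θ : ℝ) (hθ : 0 < θ)
    (A : ℝ → ℝ) (B C : ℝ)
    (hA_nonneg : ∀ t ∈ Set.Icc (0:ℝ) t₀, 0 ≤ A t)
    (hA_int : IntervalIntegrable A MeasureTheory.volume 0 t₀)
    (hB : 0 ≤ B) (hC : 0 ≤ C)
    (hgrowth1 : ∀ t ∈ Set.Icc (0:ℝ) t₀, ∀ x : ℕ → ℝ,
      semS (np p) (fun i => f i t x) ≤ A t * semS (np p) x + B)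
    (hgrowth2 : ∀ t ∈ Set.Icc t₀ tp, ∀ x : ℕ → ℝ,
      semS (np p) (fun i => f i t x) ≤ C * (semS (np p) x + 1))
    (hM : Gconst t₀ α (np p) * (∫ t in (0:ℝ)..t₀, A t) + C / θ < 1)
    (ρ : ℝ)
    (hρ : (1 - (Gconst t₀ α (np p) * (∫ t in (0:ℝ)..t₀, A t) + C / θ))⁻¹ *
        (Gconst t₀ α (np p) * t₀ * B + C * (tp - t₀)) ≤ ρ) :
    Set.MapsTo T
      {x | max (Psem t₀ (np p) x) (Qsem t₀ tp θ ht₀.le (np p) x) ≤ ρ}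
      {x | max (Psem t₀ (np p) x) (Qsem t₀ tp θ ht₀.le (np p) x) ≤ ρ} :=
  statement_10_general ht₀.le htp.le hθ
    (fun v i _ => ContinuousOn.aestronglyMeasurable
      ((continuousOn_nemytskii (hf i) v).mono Set.Icc_subset_Ici_self) measurableSet_Icc)
    hT hA_nonneg hA_int hB hC hgrowth1 hgrowth2 hM hρ
end
end
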